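/- (Fermionic source coding, direct part.) Let ρ be a density matrix on ℂ^(2^L) commuting with the parity operator P_L, with von Neumann entropy S(ρ) = −Tr(ρ log₂ ρ). For every R > S(ρ) and δ > 0 there exists N₀ ∈ ℕ such that for every N ≥ N₀ there exist M ∈ ℕ with M ≤ N·R, a finite family {E_i} of 2^M × 2^(NL) matrices with Σ_i E_iᴴE_i = I and each parity-homogeneous (P_M E_i = E_i P_L^{⊗N} or P_M E_i = −E_i P_L^{⊗N}), and a finite family {D_j} of 2^(NL) × 2^M matrices with Σ_j D_jᴴD_j = I and each parity-homogeneous (P_L^{⊗N} D_j = D_j P_M or P_L^{⊗N} D_j = −D_j P_M), such that the entanglement fidelity of the composite channel satisfies Σ_{i,j} |Tr(ρ^{⊗N} D_j E_i)|² ≥ 1 − δ. -/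

import Mathlib

open Matrix
open scoped ComplexOrder

noncomputable section

/-- Bit strings of length `L`. -/
abbrev BitStr (L : ℕ) := Fin L → Fin 2

/-- The parity operator `P_L = Z^{⊗L}` on `ℂ^(2^L)`: the diagonal matrix with entries
`(−1)^(s₁+⋯+s_L)`. -/
def parityOp (L : ℕ) : Matrix (BitStr L) (BitStr L) ℂ :=
  Matrix.diagonal fun s => (-1 : ℂ) ^ (∑ i, (s i : ℕ))

/-- `N`-fold tensor (Kronecker) power of a matrix. -/
def tpow {d : Type*} (ρ : Matrix d d ℂ) (N : ℕ) : Matrix (Fin N → d) (Fin N → d) ℂ :=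
  Matrix.of fun a b => ∏ k, ρ (a k) (b k)

/-- The von Neumann entropy `S(ρ) = −Tr(ρ log₂ ρ) = −Σ_x p_x log₂ p_x`, computed from the
eigenvalues of a Hermitian matrix. -/
def vnEntropy {n : Type*} [Fintype n] [DecidableEq n] {ρ : Matrix n n ℂ}
    (hρ : ρ.IsHermitian) : ℝ :=
  -∑ i, hρ.eigenvalues i * Real.logb 2 (hρ.eigenvalues i)

/-!
Since `ρ` commutes with the parity, the two have a common eigenbasis, so `ρ^{⊗N}` is a classical
i.i.d. source whose words have definite parity. For `S(ρ) < c` the words of probability at least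
`2 ^ (-N c)` number at most `2 ^ (N c)` and, by a Chernoff bound, carry almost all of the
probability. Mapping each of them to its own bit string, with one extra mode that is set so as to
give the code word the parity of the source word, is an even partial isometry `V` into slightly more
than `N c` modes. It is completed to a channel by the resets `|y₀⟩⟨x|` on the remaining words `x`,
and these are parity-homogeneous because they involve a single basis vector on either side. With
`V` as a Kraus operator of the encoder and `Vᴴ` of the decoder, the composition has the Kraus
operator `Vᴴ V`, the projection onto the typical words, which alone contributes the square of
their probability to the entanglement fidelity.
-/

open Filter Topology

section TypicalSets

variable {ι : Type*} [Fintype ι] {p X : ι → ℝ} {c : ℝ} {N : ℕ}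

lemma exists_pos_sum_mul_exp_lt_one (hp : ∑ i, p i = 1) (hX : ∑ i, p i * X i < 0) :
    ∃ t > 0, ∑ i, p i * Real.exp (t * X i) < 1 := by
  have hderiv : HasDerivAt (fun t : ℝ => ∑ i, p i * Real.exp (t * X i)) (∑ i, p i * X i) 0 := by
    refine HasDerivAt.fun_sum fun i _ => ?_
    simpa using ((hasDerivAt_mul_const (x := 0) (X i)).exp).const_mul (p i)
  have hslope := hderiv.tendsto_slope_zero_right.eventually_lt_const hX
  obtain ⟨t, ht, ht0⟩ := (hslope.and self_mem_nhdsWithin).exists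
  refine ⟨t, ht0, ?_⟩
  simpa [hp, smul_eq_mul, inv_pos.2 ht0, mul_neg_iff, (inv_pos.2 ht0).not_gt] using ht

lemma sum_prod_filter_nonneg_le (hp : ∀ i, 0 ≤ p i) {t : ℝ} (ht : 0 ≤ t) (N : ℕ) :
    ∑ x : Fin N → ι with 0 ≤ ∑ k, X (x k), ∏ k, p (x k) ≤
      (∑ i, p i * Real.exp (t * X i)) ^ N := by
  have hnonneg (x : Fin N → ι) : 0 ≤ ∏ k, p (x k) * Real.exp (t * X (x k)) :=
    Finset.prod_nonneg fun k _ => mul_nonneg (hp _) (Real.exp_pos _).le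
  calc ∑ x : Fin N → ι with 0 ≤ ∑ k, X (x k), ∏ k, p (x k)
      ≤ ∑ x : Fin N → ι with 0 ≤ ∑ k, X (x k), ∏ k, p (x k) * Real.exp (t * X (x k)) := by
        refine Finset.sum_le_sum fun x hx => ?_
        rw [Finset.prod_mul_distrib, ← Real.exp_sum, ← Finset.mul_sum]
        exact le_mul_of_one_le_right (Finset.prod_nonneg fun k _ => hp _)
          (Real.one_le_exp (mul_nonneg ht (Finset.mem_filter.1 hx).2))
    _ ≤ ∑ x : Fin N → ι, ∏ k, p (x k) * Real.exp (t * X (x k)) :=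
        Finset.sum_le_univ_sum_of_nonneg hnonneg
    _ = (∑ i, p i * Real.exp (t * X i)) ^ N :=
        (Fintype.sum_pow (fun i => p i * Real.exp (t * X i)) N).symm

lemma tendsto_sum_prod_filter_nonneg (hp : ∀ i, 0 ≤ p i) (hp1 : ∑ i, p i = 1)
    (hX : ∑ i, p i * X i < 0) :
    Tendsto (fun N : ℕ => ∑ x : Fin N → ι with 0 ≤ ∑ k, X (x k), ∏ k, p (x k)) atTop (𝓝 0) := by
  obtain ⟨t, ht, hlt⟩ := exists_pos_sum_mul_exp_lt_one hp1 hX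
  have hmgf : 0 ≤ ∑ i, p i * Real.exp (t * X i) :=
    Finset.sum_nonneg fun i _ => mul_nonneg (hp i) (Real.exp_pos _).le
  exact squeeze_zero (fun N => Finset.sum_nonneg fun x _ => Finset.prod_nonneg fun k _ => hp _)
    (sum_prod_filter_nonneg_le hp ht.le) (tendsto_pow_atTop_nhds_zero_of_lt_one hmgf hlt)

/-- The words of length `N` that are typical at rate `c` for the i.i.d. source `p`, i.e. have
probability at least `2 ^ (-N c)`. The usual upper bound on the probability is dropped: coding only
needs these words to be few. -/
def typicalSet (p : ι → ℝ) (c : ℝ) (N : ℕ) : Finset (Fin N → ι) :=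
  {x | (2 : ℝ) ^ (-(N * c)) ≤ ∏ k, p (x k)}

lemma card_typicalSet_le (hp : ∀ i, 0 ≤ p i) (hp1 : ∑ i, p i = 1) :
    ((typicalSet p c N).card : ℝ) ≤ 2 ^ (N * c) := by
  have hcard : (typicalSet p c N).card * (2 : ℝ) ^ (-(N * c)) ≤ 1 := by
    calc (typicalSet p c N).card * (2 : ℝ) ^ (-(N * c))
        ≤ ∑ x ∈ typicalSet p c N, ∏ k, p (x k) := by
          rw [← nsmul_eq_mul]
          exact Finset.card_nsmul_le_sum _ _ _ fun x hx => (Finset.mem_filter.1 hx).2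
      _ ≤ ∑ x : Fin N → ι, ∏ k, p (x k) :=
          Finset.sum_le_univ_sum_of_nonneg fun x => Finset.prod_nonneg fun k _ => hp _
      _ = 1 := by rw [← Fintype.sum_pow, hp1, one_pow]
  rwa [Real.rpow_neg two_pos.le, ← div_eq_mul_inv, div_le_one (by positivity)] at hcard

lemma sum_logb_nonneg_of_notMem_typicalSet (hp : ∀ i, 0 ≤ p i) {x : Fin N → ι}
    (hx : x ∉ typicalSet p c N) (hx0 : ∏ k, p (x k) ≠ 0) :
    0 ≤ ∑ k, (-Real.logb 2 (p (x k)) - c) := by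
  have hpos : 0 < ∏ k, p (x k) := (Finset.prod_nonneg fun k _ => hp _).lt_of_ne' hx0
  have hlog : Real.logb 2 (∏ k, p (x k)) < -(N * c) := by
    rw [Real.logb_lt_iff_lt_rpow one_lt_two hpos]
    simpa [typicalSet] using hx
  rw [Real.logb_prod _ _ (Finset.prod_ne_zero_iff.1 hx0)] at hlog
  simp only [Finset.sum_sub_distrib, Finset.sum_neg_distrib, Finset.sum_const, Finset.card_univ,
    Fintype.card_fin, nsmul_eq_mul]
  linarith

lemma tendsto_sum_typicalSet (hp : ∀ i, 0 ≤ p i) (hp1 : ∑ i, p i = 1)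
    (hc : -∑ i, p i * Real.logb 2 (p i) < c) :
    Tendsto (fun N => ∑ x ∈ typicalSet p c N, ∏ k, p (x k)) atTop (𝓝 1) := by
  classical
  have hmean : ∑ i, p i * (-Real.logb 2 (p i) - c) < 0 := by
    simp only [mul_sub, mul_neg, Finset.sum_sub_distrib, Finset.sum_neg_distrib, ← Finset.sum_mul,
      hp1, one_mul]
    linarith
  have hprod (N : ℕ) (x : Fin N → ι) : 0 ≤ ∏ k, p (x k) := Finset.prod_nonneg fun k _ => hp _
  have hcompl : Tendsto (fun N => ∑ x ∈ (typicalSet p c N)ᶜ, ∏ k, p (x k)) atTop (𝓝 0) := by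
    refine squeeze_zero (fun N => Finset.sum_nonneg fun x _ => hprod N x) (fun N => ?_)
      (tendsto_sum_prod_filter_nonneg hp hp1 hmean)
    rw [← Finset.sum_filter_ne_zero]
    refine Finset.sum_le_sum_of_subset_of_nonneg (fun x hx => ?_) fun x _ _ => hprod N x
    obtain ⟨hxT, hx0⟩ := Finset.mem_filter.1 hx
    exact Finset.mem_filter.2 ⟨Finset.mem_univ x,
      sum_logb_nonneg_of_notMem_typicalSet hp (Finset.mem_compl.1 hxT) hx0⟩
  have htotal (N : ℕ) : 1 - ∑ x ∈ (typicalSet p c N)ᶜ, ∏ k, p (x k) =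
      ∑ x ∈ typicalSet p c N, ∏ k, p (x k) := by
    rw [sub_eq_iff_eq_add, Finset.sum_add_sum_compl, ← Fintype.sum_pow, hp1, one_pow]
  simpa [htotal] using hcompl.const_sub 1

lemma neg_sum_mul_logb_nonneg (hp : ∀ i, 0 ≤ p i) (hp1 : ∑ i, p i = 1) :
    0 ≤ -∑ i, p i * Real.logb 2 (p i) := by
  rw [neg_nonneg]
  refine Finset.sum_nonpos fun i _ => mul_nonpos_of_nonneg_of_nonpos (hp i)
    (Real.logb_nonpos one_lt_two (hp i) ?_)
  exact hp1 ▸ Finset.single_le_sum (fun j _ => hp j) (Finset.mem_univ i)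

end TypicalSets

section TensorPower

variable {d : Type*}

lemma tpow_conjTranspose (A : Matrix d d ℂ) (N : ℕ) : tpow Aᴴ N = (tpow A N)ᴴ := by
  ext a b
  simp [tpow, Matrix.conjTranspose_apply]

lemma tpow_mul [Fintype d] (A B : Matrix d d ℂ) (N : ℕ) : tpow (A * B) N = tpow A N * tpow B N := by
  ext a b
  simp only [tpow, Matrix.of_apply, Matrix.mul_apply, Fintype.prod_sum, Finset.prod_mul_distrib]

lemma tpow_diagonal [DecidableEq d] (v : d → ℂ) (N : ℕ) :
    tpow (Matrix.diagonal v) N = Matrix.diagonal fun x : Fin N → d => ∏ k, v (x k) := by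
  ext a b
  obtain rfl | hab := eq_or_ne a b
  · simp [tpow]
  · obtain ⟨k, hk⟩ := Function.ne_iff.1 hab
    rw [Matrix.diagonal_apply_ne _ hab]
    exact Finset.prod_eq_zero (Finset.mem_univ k) (Matrix.diagonal_apply_ne _ hk)

lemma tpow_mem_unitaryGroup [Fintype d] [DecidableEq d] {U : Matrix d d ℂ}
    (hU : U ∈ Matrix.unitaryGroup d ℂ) (N : ℕ) :
    tpow U N ∈ Matrix.unitaryGroup (Fin N → d) ℂ := by
  rw [Matrix.mem_unitaryGroup_iff, Matrix.star_eq_conjTranspose] at hU ⊢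
  rw [← tpow_conjTranspose, ← tpow_mul, hU, ← Matrix.diagonal_one, tpow_diagonal]
  simp only [Finset.prod_const_one, Matrix.diagonal_one]

end TensorPower

section SimultaneousDiagonalization

variable {𝕜 : Type*} [RCLike 𝕜]

lemma exists_orthonormalBasis_apply_eq_smul {E ι : Type*} [NormedAddCommGroup E]
    [InnerProductSpace 𝕜 E] [FiniteDimensional 𝕜 E] [Fintype ι]
    (hι : Module.finrank 𝕜 E = Fintype.card ι) {A B : E →ₗ[𝕜] E} (hA : A.IsSymmetric)
    (hB : B.IsSymmetric) (hAB : Commute A B) :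
    ∃ (b : OrthonormalBasis ι 𝕜 E) (α β : ι → 𝕜),
      ∀ i, A (b i) = α i • b i ∧ B (b i) = β i • b i := by
  classical
  let V (μ : 𝕜 × 𝕜) : Submodule 𝕜 E :=
    Module.End.eigenspace A μ.2 ⊓ Module.End.eigenspace B μ.1
  have hV : DirectSum.IsInternal V := hA.directSum_isInternal_of_commute hB hAB
  let W (μ : {μ // V μ ≠ ⊥}) : Submodule 𝕜 E := V μ
  have hW : DirectSum.IsInternal W := DirectSum.isInternal_ne_bot_iff.2 hV
  have hWorth : OrthogonalFamily 𝕜 (fun μ => W μ) fun μ => (W μ).subtypeₗᵢ :=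
    (hA.orthogonalFamily_eigenspace_inf_eigenspace hB).comp Subtype.val_injective
  let : Fintype {μ // V μ ≠ ⊥} :=
    (WellFoundedGT.finite_ne_bot_of_iSupIndep hV.submodule_iSupIndep).fintype
  let e := Fintype.equivFin ι
  let μ (i : ι) : {μ // V μ ≠ ⊥} := hW.subordinateOrthonormalBasisIndex hι (e i) hWorth
  refine ⟨(hW.subordinateOrthonormalBasis hι hWorth).reindex e.symm, fun i => (μ i).1.2,
    fun i => (μ i).1.1, fun i => ?_⟩
  rw [OrthonormalBasis.reindex_apply, Equiv.symm_symm]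
  obtain ⟨hiA, hiB⟩ := hW.subordinateOrthonormalBasis_subordinate hι (e i) hWorth
  exact ⟨Module.End.mem_eigenspace_iff.1 hiA, Module.End.mem_eigenspace_iff.1 hiB⟩

variable {n : Type*} [Fintype n] [DecidableEq n]

lemma eq_mul_diagonal_mul_conjTranspose_of_toEuclideanLin_apply {A : Matrix n n 𝕜}
    {b : OrthonormalBasis n 𝕜 (EuclideanSpace 𝕜 n)} {α : n → 𝕜}
    (h : ∀ i, Matrix.toEuclideanLin A (b i) = α i • b i) :
    A = (EuclideanSpace.basisFun n 𝕜).toBasis.toMatrix b * Matrix.diagonal α *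
      ((EuclideanSpace.basisFun n 𝕜).toBasis.toMatrix b)ᴴ := by
  set U := (EuclideanSpace.basisFun n 𝕜).toBasis.toMatrix b
  have hU : U * Uᴴ = 1 := Matrix.mem_unitaryGroup_iff.1
    ((EuclideanSpace.basisFun n 𝕜).toMatrix_orthonormalBasis_mem_unitary b)
  have hAU : A * U = U * Matrix.diagonal α := by
    ext i j
    rw [Matrix.mul_diagonal]
    simpa [U, Matrix.mul_apply, Matrix.mulVec, dotProduct, Module.Basis.toMatrix_apply, mul_comm,
      Matrix.toLpLin_apply] using congrArg (fun v : EuclideanSpace 𝕜 n => v i) (h j)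
  rw [← hAU, Matrix.mul_assoc, hU, Matrix.mul_one]

lemma exists_unitary_eq_diagonal_of_commute {A B : Matrix n n 𝕜} (hA : A.IsHermitian)
    (hB : B.IsHermitian) (hAB : Commute A B) :
    ∃ U ∈ Matrix.unitaryGroup n 𝕜, ∃ α β : n → 𝕜,
      A = U * Matrix.diagonal α * Uᴴ ∧ B = U * Matrix.diagonal β * Uᴴ := by
  have hcomm : Commute (Matrix.toEuclideanLin A) (Matrix.toEuclideanLin B) := by
    rw [commute_iff_eq, Module.End.mul_eq_comp, Module.End.mul_eq_comp, ← Matrix.toLpLin_mul_same,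
      hAB.eq, Matrix.toLpLin_mul_same]
  obtain ⟨b, α, β, h⟩ := exists_orthonormalBasis_apply_eq_smul finrank_euclideanSpace
    (Matrix.isSymmetric_toEuclideanLin_iff.2 hA) (Matrix.isSymmetric_toEuclideanLin_iff.2 hB) hcomm
  exact ⟨_, (EuclideanSpace.basisFun n 𝕜).toMatrix_orthonormalBasis_mem_unitary b, α, β,
    eq_mul_diagonal_mul_conjTranspose_of_toEuclideanLin_apply fun i => (h i).1,
    eq_mul_diagonal_mul_conjTranspose_of_toEuclideanLin_apply fun i => (h i).2⟩

end SimultaneousDiagonalization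

section Entropy

lemma sum_eigenvalues_eq_of_eq_diagonal {𝕜 n : Type*} [RCLike 𝕜] [Fintype n] [DecidableEq n]
    {A U : Matrix n n 𝕜} (hA : A.IsHermitian) (hU : U ∈ Matrix.unitaryGroup n 𝕜) {p : n → ℝ}
    (h : A = U * Matrix.diagonal (fun i => (p i : 𝕜)) * Uᴴ) (f : ℝ → ℝ) :
    ∑ i, f (hA.eigenvalues i) = ∑ i, f (p i) := by
  have hU' : Uᴴ * U = 1 := Matrix.mem_unitaryGroup_iff'.1 hU
  have hchar : A.charpoly = (Matrix.diagonal fun i => (p i : 𝕜)).charpoly := by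
    rw [h, Matrix.charpoly_mul_comm, ← Matrix.mul_assoc, hU', Matrix.one_mul]
  have hroots : Finset.univ.val.map (fun i => (hA.eigenvalues i : 𝕜)) =
      Finset.univ.val.map fun i => (p i : 𝕜) := by
    rw [Matrix.charpoly_diagonal] at hchar
    calc Finset.univ.val.map (fun i => (hA.eigenvalues i : 𝕜)) = A.charpoly.roots :=
          hA.roots_charpoly_eq_eigenvalues.symm
      _ = Finset.univ.val.map fun i => (p i : 𝕜) := by
          rw [hchar, Polynomial.roots_prod _ _
            (Finset.prod_ne_zero_iff.2 fun i _ => Polynomial.X_sub_C_ne_zero _)]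
          simp only [Polynomial.roots_X_sub_C, Multiset.bind_singleton]
  simpa [Function.comp_def] using
    congrArg (fun m => (m.map fun z : 𝕜 => f (RCLike.re z)).sum) hroots

lemma vnEntropy_eq_of_eq_diagonal {n : Type*} [Fintype n] [DecidableEq n]
    {A U : Matrix n n ℂ} (hA : A.IsHermitian) (hU : U ∈ Matrix.unitaryGroup n ℂ) {p : n → ℝ}
    (h : A = U * Matrix.diagonal (fun i => (p i : ℂ)) * Uᴴ) :
    vnEntropy hA = -∑ i, p i * Real.logb 2 (p i) := by
  rw [vnEntropy, sum_eigenvalues_eq_of_eq_diagonal hA hU h fun x => x * Real.logb 2 x]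

end Entropy

section ParityDiagonal

variable {X d : Type*} [DecidableEq X] [DecidableEq d]

/-- The parity operator of a space with a basis of vectors of definite parity, where `s x` is the
parity of the basis vector `x`. -/
def parityDiagonal (s : X → ℤˣ) : Matrix X X ℂ :=
  Matrix.diagonal fun x => ((s x : ℤ) : ℂ)

lemma tpow_parityDiagonal (s : d → ℤˣ) (N : ℕ) :
    tpow (parityDiagonal s) N = parityDiagonal fun x : Fin N → d => ∏ k, s (x k) := by
  simp only [parityDiagonal, tpow_diagonal, Units.coe_prod, Int.cast_prod]

lemma exists_units_eq_of_mul_self_eq_one {R : Type*} [Ring R] [NoZeroDivisors R] {z : R}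
    (hz : z * z = 1) : ∃ u : ℤˣ, z = ((u : ℤ) : R) := by
  obtain rfl | rfl := mul_self_eq_one_iff.1 hz
  · exact ⟨1, by simp⟩
  · exact ⟨-1, by simp⟩

variable [Fintype d] {U : Matrix d d ℂ} {v : d → ℂ}

lemma nonneg_of_posSemidef_unitary_conj_diagonal (hU : U ∈ Matrix.unitaryGroup d ℂ)
    (h : (U * Matrix.diagonal v * Uᴴ).PosSemidef) (i : d) : 0 ≤ v i := by
  have hunit : IsUnit U := (Unitary.toUnits ⟨U, hU⟩).isUnit
  exact Matrix.posSemidef_diagonal_iff.1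
    ((Matrix.IsUnit.posSemidef_star_right_conjugate_iff hunit).1 h) i

lemma exists_parityDiagonal_eq_of_mul_self_eq_one (hU : U ∈ Matrix.unitaryGroup d ℂ)
    (h : U * Matrix.diagonal v * Uᴴ * (U * Matrix.diagonal v * Uᴴ) = 1) :
    ∃ s : d → ℤˣ, Matrix.diagonal v = parityDiagonal s := by
  have hUU : Uᴴ * U = 1 := Matrix.mem_unitaryGroup_iff'.1 hU
  have hv : Matrix.diagonal (fun i => v i * v i) = (1 : Matrix d d ℂ) := by
    calc Matrix.diagonal (fun i => v i * v i)
        = Uᴴ * (U * Matrix.diagonal v * Uᴴ * (U * Matrix.diagonal v * Uᴴ)) * U := by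
          rw [← Matrix.diagonal_mul_diagonal]
          simp only [Matrix.mul_assoc, hUU, Matrix.mul_one]
          simp only [← Matrix.mul_assoc, hUU, Matrix.one_mul]
      _ = 1 := by rw [h, Matrix.mul_one, hUU]
  have hsign (i : d) : ∃ u : ℤˣ, v i = ((u : ℤ) : ℂ) :=
    exists_units_eq_of_mul_self_eq_one (by simpa using congrFun (congrFun hv i) i)
  choose s hs using hsign
  exact ⟨s, congrArg Matrix.diagonal (funext hs)⟩

lemma exists_unitary_eq_diagonal_parityDiagonal {ρ P : Matrix d d ℂ} (hρ : ρ.PosSemidef)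
    (htr : ρ.trace = 1) (hP : P.IsHermitian) (hP2 : P * P = 1) (hcomm : Commute ρ P) :
    ∃ U ∈ Matrix.unitaryGroup d ℂ, ∃ (p : d → ℝ) (s : d → ℤˣ), (∀ i, 0 ≤ p i) ∧ ∑ i, p i = 1 ∧
      ρ = U * Matrix.diagonal (fun i => (p i : ℂ)) * Uᴴ ∧ P = U * parityDiagonal s * Uᴴ := by
  obtain ⟨U, hU, α, β, rfl, rfl⟩ := exists_unitary_eq_diagonal_of_commute hρ.1 hP hcomm
  have hUU : Uᴴ * U = 1 := Matrix.mem_unitaryGroup_iff'.1 hU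
  have hα : ∀ i, 0 ≤ α i := nonneg_of_posSemidef_unitary_conj_diagonal hU hρ
  have hre : (fun i => ((α i).re : ℂ)) = α :=
    funext fun i => (Complex.eq_re_of_ofReal_le (hα i)).symm
  obtain ⟨s, hs⟩ := exists_parityDiagonal_eq_of_mul_self_eq_one hU hP2
  refine ⟨U, hU, fun i => (α i).re, s, fun i => (Complex.nonneg_iff.1 (hα i)).1, ?_, ?_, ?_⟩
  · rw [Matrix.trace_mul_cycle, hUU, Matrix.one_mul, Matrix.trace_diagonal] at htr
    rw [← Complex.re_sum, htr, Complex.one_re]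
  · rw [hre]
  · rw [hs]

end ParityDiagonal

section ParityCode

variable {X Y : Type*} [Fintype X] [Fintype Y] {P ρ U : Matrix X X ℂ} {Q : Matrix Y Y ℂ} {F : ℝ}

/-- The operator `K` between spaces with parity operators `P` and `Q` preserves parity or reverses
it. -/
def IsParityHomogeneous (P : Matrix X X ℂ) (Q : Matrix Y Y ℂ) (K : Matrix Y X ℂ) : Prop :=
  Q * K = K * P ∨ Q * K = -(K * P)

/-- The entanglement fidelity of the state `ρ` under the channel with Kraus operators `K i`. -/
def entanglementFidelity {ι : Type*} [Fintype ι] (ρ : Matrix X X ℂ) (K : ι → Matrix X X ℂ) : ℝ :=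
  ∑ i, ‖(ρ * K i).trace‖ ^ 2

lemma sq_norm_trace_le_entanglementFidelity {ι : Type*} [Fintype ι] {K : ι → Matrix X X ℂ} (i : ι) :
    ‖(ρ * K i).trace‖ ^ 2 ≤ entanglementFidelity ρ K :=
  Finset.single_le_sum (f := fun i => ‖(ρ * K i).trace‖ ^ 2) (fun _ _ => sq_nonneg _)
    (Finset.mem_univ i)

variable [DecidableEq X]

/-- The `K i` are Kraus operators of an admissible fermionic channel between spaces with parity
operators `P` and `Q`. -/
structure IsParityChannel {ι : Type*} [Fintype ι] (P : Matrix X X ℂ) (Q : Matrix Y Y ℂ)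
    (K : ι → Matrix Y X ℂ) : Prop where
  sum_conjTranspose_mul_self : ∑ i, (K i)ᴴ * K i = 1
  isParityHomogeneous : ∀ i, IsParityHomogeneous P Q (K i)

lemma IsParityChannel.comp_equiv {ι κ : Type*} [Fintype ι] [Fintype κ] {K : ι → Matrix Y X ℂ}
    (hK : IsParityChannel P Q K) (e : κ ≃ ι) : IsParityChannel P Q (K ∘ e) where
  sum_conjTranspose_mul_self :=
    (Equiv.sum_comp e fun i => (K i)ᴴ * K i).trans hK.sum_conjTranspose_mul_self
  isParityHomogeneous i := hK.isParityHomogeneous (e i)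

lemma IsParityChannel.mul_conjTranspose_unitary {ι : Type*} [Fintype ι] {K : ι → Matrix Y X ℂ}
    (hK : IsParityChannel P Q K) (hU : U ∈ Matrix.unitaryGroup X ℂ) :
    IsParityChannel (U * P * Uᴴ) Q fun i => K i * Uᴴ where
  sum_conjTranspose_mul_self := by
    have hUU : U * Uᴴ = 1 := Matrix.mem_unitaryGroup_iff.1 hU
    calc ∑ i, (K i * Uᴴ)ᴴ * (K i * Uᴴ) = U * (∑ i, (K i)ᴴ * K i) * Uᴴ := by
          simp only [Matrix.conjTranspose_mul, Matrix.conjTranspose_conjTranspose, Matrix.mul_sum,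
            Matrix.sum_mul, Matrix.mul_assoc]
      _ = 1 := by rw [hK.sum_conjTranspose_mul_self, Matrix.mul_one, hUU]
  isParityHomogeneous i := by
    have hUU : Uᴴ * U = 1 := Matrix.mem_unitaryGroup_iff'.1 hU
    have hcomp : K i * Uᴴ * (U * P * Uᴴ) = K i * P * Uᴴ := by
      rw [Matrix.mul_assoc U, Matrix.mul_assoc (K i), ← Matrix.mul_assoc Uᴴ, hUU, Matrix.one_mul,
        Matrix.mul_assoc]
    rw [IsParityHomogeneous, hcomp, ← Matrix.mul_assoc, ← Matrix.neg_mul]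
    exact (hK.isParityHomogeneous i).imp (congrArg (· * Uᴴ)) (congrArg (· * Uᴴ))

variable [DecidableEq Y]

lemma IsParityChannel.unitary_mul {ι : Type*} [Fintype ι] {K : ι → Matrix X Y ℂ}
    (hK : IsParityChannel Q P K) (hU : U ∈ Matrix.unitaryGroup X ℂ) :
    IsParityChannel Q (U * P * Uᴴ) fun i => U * K i where
  sum_conjTranspose_mul_self := by
    have hUU : Uᴴ * U = 1 := Matrix.mem_unitaryGroup_iff'.1 hU
    have hterm (i : ι) : (U * K i)ᴴ * (U * K i) = (K i)ᴴ * K i := by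
      rw [Matrix.conjTranspose_mul, Matrix.mul_assoc, ← Matrix.mul_assoc Uᴴ, hUU, Matrix.one_mul]
    simp only [hterm, hK.sum_conjTranspose_mul_self]
  isParityHomogeneous i := by
    have hUU : Uᴴ * U = 1 := Matrix.mem_unitaryGroup_iff'.1 hU
    have hcomp : U * P * Uᴴ * (U * K i) = U * (P * K i) := by
      rw [Matrix.mul_assoc, ← Matrix.mul_assoc Uᴴ, hUU, Matrix.one_mul, Matrix.mul_assoc]
    rw [IsParityHomogeneous, hcomp, Matrix.mul_assoc, ← Matrix.mul_neg]
    exact (hK.isParityHomogeneous i).imp (congrArg (U * ·)) (congrArg (U * ·))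

/-- The state `ρ` of a space with parity operator `P` can be encoded into a space with parity
operator `Q`, and decoded, by admissible fermionic channels with fidelity at least `F`. -/
def HasParityCode (P : Matrix X X ℂ) (Q : Matrix Y Y ℂ) (ρ : Matrix X X ℂ) (F : ℝ) : Prop :=
  ∃ (nE : ℕ) (E : Fin nE → Matrix Y X ℂ) (nD : ℕ) (D : Fin nD → Matrix X Y ℂ),
    IsParityChannel P Q E ∧ IsParityChannel Q P D ∧
      F ≤ entanglementFidelity ρ fun a : Fin nE × Fin nD => D a.2 * E a.1

lemma IsParityChannel.hasParityCode {ι κ : Type*} [Fintype ι] [Fintype κ] {E : ι → Matrix Y X ℂ}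
    {D : κ → Matrix X Y ℂ} (hE : IsParityChannel P Q E) (hD : IsParityChannel Q P D)
    (hF : F ≤ entanglementFidelity ρ fun a : ι × κ => D a.2 * E a.1) :
    HasParityCode P Q ρ F := by
  let e := (Fintype.equivFin ι).symm
  let e' := (Fintype.equivFin κ).symm
  refine ⟨_, E ∘ e, _, D ∘ e', hE.comp_equiv e, hD.comp_equiv e', hF.trans_eq ?_⟩
  exact (Equiv.sum_comp (e.prodCongr e') fun a => ‖(ρ * (D a.2 * E a.1)).trace‖ ^ 2).symm

lemma HasParityCode.conj_unitary (h : HasParityCode P Q ρ F) (hU : U ∈ Matrix.unitaryGroup X ℂ) :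
    HasParityCode (U * P * Uᴴ) Q (U * ρ * Uᴴ) F := by
  obtain ⟨nE, E, nD, D, hE, hD, hF⟩ := h
  have hUU : Uᴴ * U = 1 := Matrix.mem_unitaryGroup_iff'.1 hU
  have htrace (A : Matrix X X ℂ) : (U * ρ * Uᴴ * (U * A * Uᴴ)).trace = (ρ * A).trace := by
    calc (U * ρ * Uᴴ * (U * A * Uᴴ)).trace = (U * (ρ * (Uᴴ * U) * A) * Uᴴ).trace := by
          simp only [Matrix.mul_assoc]
      _ = (ρ * A).trace := by
          rw [Matrix.trace_mul_cycle, hUU, Matrix.one_mul, Matrix.mul_one]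
  refine ⟨nE, _, nD, _, hE.mul_conjTranspose_unitary hU, hD.unitary_mul hU, hF.trans_eq ?_⟩
  refine Finset.sum_congr rfl fun a _ => ?_
  rw [← htrace]
  simp only [Matrix.mul_assoc]

lemma HasParityCode.mono {F' : ℝ} (h : HasParityCode P Q ρ F) (hF : F' ≤ F) :
    HasParityCode P Q ρ F' := by
  obtain ⟨nE, E, nD, D, hE, hD, hfid⟩ := h
  exact ⟨nE, E, nD, D, hE, hD, hF.trans hfid⟩

end ParityCode

section KrausCompletion

variable {X Y : Type*} [DecidableEq X] [DecidableEq Y]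

/-- Kraus operators of the channel that maps the basis vector `x` coherently to `f x` where the
partial injection `f` is defined, and resets it to `y₀` where it is not. -/
def krausCompletion (f : X ≃. Y) (y₀ : Y) : Option X → Matrix Y X ℂ
  | none => f.symm.toMatrix
  | some x => if (f x).isSome then 0 else Matrix.single y₀ x 1

lemma toMatrix_mul_toMatrix_symm [Fintype Y] (f : X ≃. Y) :
    (f.toMatrix : Matrix X Y ℂ) * (f.symm.toMatrix : Matrix Y X ℂ) =
      Matrix.diagonal fun x => if (f x).isSome then (1 : ℂ) else 0 := by
  rw [← PEquiv.toMatrix_trans, PEquiv.self_trans_symm]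
  ext x x'
  rw [PEquiv.toMatrix_apply, Matrix.diagonal_apply]
  simp only [PEquiv.mem_ofSet_iff, Set.mem_ofPred_eq]
  split_ifs <;> simp_all

variable [Fintype X] [Fintype Y]

lemma sum_conjTranspose_mul_self_krausCompletion (f : X ≃. Y) (y₀ : Y) :
    ∑ i, (krausCompletion f y₀ i)ᴴ * krausCompletion f y₀ i = 1 := by
  have hcoherent : (f.symm.toMatrix : Matrix Y X ℂ)ᴴ = f.toMatrix := by
    ext x y
    simp only [Matrix.conjTranspose_apply, PEquiv.toMatrix_apply, f.mem_iff_mem, apply_ite star,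
      star_one, star_zero]
  have hreset (x : X) : (krausCompletion f y₀ (some x))ᴴ * krausCompletion f y₀ (some x) =
      Matrix.single x x (if (f x).isSome then 0 else 1) := by
    rw [krausCompletion]
    split_ifs <;> simp
  rw [Fintype.sum_option, Finset.sum_congr rfl fun x _ => hreset x, Matrix.sum_single_eq_diagonal,
    krausCompletion, hcoherent, toMatrix_mul_toMatrix_symm, Matrix.diagonal_add,
    ← Matrix.diagonal_one]
  congr! 2 with x
  split_ifs <;> simp

lemma isParityHomogeneous_of_forall_ne_zero {s : X → ℤˣ} {t : Y → ℤˣ} {K : Matrix Y X ℂ} (ε : ℤˣ)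
    (h : ∀ y x, K y x ≠ 0 → t y = ε * s x) :
    IsParityHomogeneous (parityDiagonal s) (parityDiagonal t) K := by
  have hentry (y : Y) (x : X) :
      (parityDiagonal t * K) y x = ((ε : ℤ) : ℂ) * (K * parityDiagonal s) y x := by
    rw [parityDiagonal, parityDiagonal, Matrix.diagonal_mul, Matrix.mul_diagonal]
    obtain hK | hK := eq_or_ne (K y x) 0
    · rw [hK, mul_zero, zero_mul, mul_zero]
    · rw [h y x hK, Units.val_mul, Int.cast_mul, mul_assoc, mul_comm (K y x)]
  obtain rfl | rfl := Int.units_eq_one_or ε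
  · exact Or.inl (Matrix.ext fun y x => by simpa using hentry y x)
  · exact Or.inr (Matrix.ext fun y x => by simpa using hentry y x)

lemma isParityHomogeneous_single (s : X → ℤˣ) (t : Y → ℤˣ) (x : X) (y : Y) :
    IsParityHomogeneous (parityDiagonal s) (parityDiagonal t) (Matrix.single y x (1 : ℂ)) := by
  refine isParityHomogeneous_of_forall_ne_zero (t y * s x) fun y' x' h => ?_
  rw [Matrix.single_apply, ite_ne_right_iff] at h
  rw [← h.1.1, ← h.1.2, mul_assoc, Int.units_mul_self, mul_one]

lemma isParityHomogeneous_toMatrix_symm {s : X → ℤˣ} {t : Y → ℤˣ} {f : X ≃. Y}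
    (hf : ∀ x, ∀ y ∈ f x, t y = s x) :
    IsParityHomogeneous (parityDiagonal s) (parityDiagonal t) f.symm.toMatrix := by
  refine isParityHomogeneous_of_forall_ne_zero 1 fun y x h => ?_
  rw [PEquiv.toMatrix_apply, ite_ne_right_iff] at h
  rw [one_mul, hf x y (f.mem_iff_mem.1 h.1)]

lemma isParityChannel_krausCompletion {s : X → ℤˣ} {t : Y → ℤˣ} {f : X ≃. Y}
    (hf : ∀ x, ∀ y ∈ f x, t y = s x) (y₀ : Y) :
    IsParityChannel (parityDiagonal s) (parityDiagonal t) (krausCompletion f y₀) where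
  sum_conjTranspose_mul_self := sum_conjTranspose_mul_self_krausCompletion f y₀
  isParityHomogeneous
    | none => isParityHomogeneous_toMatrix_symm hf
    | some x => by
      rw [krausCompletion]
      split_ifs
      · simp [IsParityHomogeneous]
      · exact isParityHomogeneous_single s t x y₀

lemma hasParityCode_diagonal [Nonempty X] [Nonempty Y] {s : X → ℤˣ} {t : Y → ℤˣ} {f : X ≃. Y}
    (hf : ∀ x, ∀ y ∈ f x, t y = s x) (p : X → ℝ) :
    HasParityCode (parityDiagonal s) (parityDiagonal t) (Matrix.diagonal fun x => (p x : ℂ))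
      ((∑ x with (f x).isSome, p x) ^ 2) := by
  inhabit X
  inhabit Y
  have hE := isParityChannel_krausCompletion hf default
  have hD := isParityChannel_krausCompletion (f := f.symm)
    (fun y x hx => (hf x y (f.mem_iff_mem.1 hx)).symm) default
  refine hE.hasParityCode hD ?_
  have hcoherent : (∑ x with (f x).isSome, p x) ^ 2 =
      ‖(Matrix.diagonal (fun x => (p x : ℂ)) *
        (krausCompletion f.symm default none * krausCompletion f default none)).trace‖ ^ 2 := by
    simp only [krausCompletion, PEquiv.symm_symm, toMatrix_mul_toMatrix_symm,
      Matrix.diagonal_mul_diagonal, Matrix.trace_diagonal, mul_ite, mul_one, mul_zero,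
      ← Finset.sum_filter, ← Complex.ofReal_sum, Complex.norm_real, Real.norm_eq_abs, sq_abs]
  exact hcoherent.trans_le (sq_norm_trace_le_entanglementFidelity
    (K := fun a : Option X × Option Y =>
      krausCompletion f.symm default a.2 * krausCompletion f default a.1) (none, none))

end KrausCompletion

section BitParity

/-- The parity of a bit string, as a sign. -/
def bitParity {M : ℕ} (b : BitStr M) : ℤˣ := (-1) ^ ∑ i, (b i : ℕ)

lemma parityOp_eq_parityDiagonal (M : ℕ) : parityOp M = parityDiagonal bitParity := by
  simp [parityOp, parityDiagonal, bitParity]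

lemma parityOp_isHermitian (M : ℕ) : (parityOp M).IsHermitian := by
  rw [parityOp, Matrix.isHermitian_diagonal_iff]
  exact fun b => (IsSelfAdjoint.one ℂ).neg.pow _

lemma parityOp_mul_self (M : ℕ) : parityOp M * parityOp M = 1 := by
  simp only [parityOp, Matrix.diagonal_mul_diagonal, ← mul_pow, neg_mul_neg, one_mul, one_pow,
    Matrix.diagonal_one]

lemma exists_bitParity_cons_eq {M : ℕ} (b : BitStr M) (s : ℤˣ) :
    ∃ a : Fin 2, bitParity (Fin.cons a b : BitStr (M + 1)) = s := by
  have hcons (a : Fin 2) :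
      bitParity (Fin.cons a b : BitStr (M + 1)) = (-1) ^ (a : ℕ) * bitParity b := by
    simp only [bitParity, Fin.sum_univ_succ, Fin.cons_zero, Fin.cons_succ, pow_add]
  obtain h | h := eq_or_ne (bitParity b) s
  · exact ⟨0, by simp [hcons, h]⟩
  · exact ⟨1, by simp [hcons, Int.units_ne_iff_eq_neg.1 h]⟩

lemma exists_pequiv_mem_iff {X Y : Type*} {T : Set X} {g : T → Y} (hg : Function.Injective g) :
    ∃ f : X ≃. Y, ∀ x y, y ∈ f x ↔ ∃ hx : x ∈ T, g ⟨x, hx⟩ = y := by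
  classical
  have hinv (x : T) (y : Y) : Function.partialInv g y = some x ↔ g x = y := hg.isPartialInv x y
  refine ⟨⟨fun x => if hx : x ∈ T then some (g ⟨x, hx⟩) else none,
    fun y => (Function.partialInv g y).map Subtype.val, fun x y => ?_⟩, fun x y => ?_⟩
  · simp only [Option.map_eq_some_iff, hinv, Subtype.exists, exists_and_right,
      exists_eq_right, Option.dite_none_right_eq_some, Option.some.injEq]
  · simp only [PEquiv.coe_mk, Option.mem_def, Option.dite_none_right_eq_some, Option.some.injEq]

lemma exists_pequiv_bitParity_eq {X : Type*} (s : X → ℤˣ) {T : Finset X} {M : ℕ}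
    (hT : T.card ≤ 2 ^ M) :
    ∃ f : X ≃. BitStr (M + 1),
      (∀ x, (f x).isSome ↔ x ∈ T) ∧ ∀ x, ∀ y ∈ f x, bitParity y = s x := by
  classical
  obtain ⟨e⟩ : Nonempty (T ↪ BitStr M) :=
    Function.Embedding.nonempty_of_card_le (by simpa using hT)
  choose a ha using fun x : T => exists_bitParity_cons_eq (e x) (s x)
  let g (x : T) : BitStr (M + 1) := Fin.cons (a x) (e x)
  have hg : Function.Injective g := fun x x' h => e.injective (Fin.cons_inj.1 h).2
  obtain ⟨f, hf⟩ := exists_pequiv_mem_iff hg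
  refine ⟨f, fun x => ?_, fun x y hxy => ?_⟩
  · rw [Option.isSome_iff_exists]
    exact ⟨fun ⟨y, hy⟩ => ((hf x y).1 hy).1, fun hx => ⟨_, (hf x _).2 ⟨hx, rfl⟩⟩⟩
  · obtain ⟨hx, rfl⟩ := (hf x y).1 hxy
    exact ha ⟨x, hx⟩

end BitParity

section SourceCoding

variable {d : Type*} [Fintype d] [DecidableEq d] {R δ : ℝ}

lemma eventually_exists_nat_mul_le_add_one_le {c : ℝ} (hc : 0 ≤ c) (hcR : c < R) :
    ∀ᶠ N : ℕ in atTop, ∃ M : ℕ, N * c ≤ M ∧ M + 1 ≤ N * R := by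
  have hgap : Tendsto (fun N : ℕ => N * (R - c)) atTop atTop :=
    tendsto_natCast_atTop_atTop.atTop_mul_const (sub_pos.2 hcR)
  filter_upwards [hgap.eventually_ge_atTop 2] with N hN
  refine ⟨⌈N * c⌉₊, Nat.le_ceil _, ?_⟩
  linarith [Nat.ceil_lt_add_one (mul_nonneg N.cast_nonneg hc)]

lemma hasParityCode_typicalSet [Nonempty d] {p : d → ℝ} (hp : ∀ i, 0 ≤ p i)
    (hp1 : ∑ i, p i = 1) (s : d → ℤˣ) {c : ℝ} {N M : ℕ} (hM : N * c ≤ M) :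
    HasParityCode (tpow (parityDiagonal s) N) (parityOp (M + 1))
      (tpow (Matrix.diagonal fun i => (p i : ℂ)) N)
      ((∑ x ∈ typicalSet p c N, ∏ k, p (x k)) ^ 2) := by
  have hcard : (typicalSet p c N).card ≤ 2 ^ M := by
    have hreal : ((typicalSet p c N).card : ℝ) ≤ 2 ^ (M : ℝ) :=
      (card_typicalSet_le hp hp1).trans (Real.rpow_le_rpow_of_exponent_le one_le_two hM)
    rw [Real.rpow_natCast] at hreal
    exact_mod_cast hreal
  obtain ⟨f, hfT, hf⟩ := exists_pequiv_bitParity_eq (fun x : Fin N → d => ∏ k, s (x k)) hcard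
  simpa [tpow_parityDiagonal, tpow_diagonal, parityOp_eq_parityDiagonal, hfT] using
    hasParityCode_diagonal hf fun x : Fin N → d => ∏ k, p (x k)

lemma eventually_exists_hasParityCode_diagonal {p : d → ℝ} (hp : ∀ i, 0 ≤ p i)
    (hp1 : ∑ i, p i = 1) (s : d → ℤˣ) (hR : -∑ i, p i * Real.logb 2 (p i) < R) (hδ : 0 < δ) :
    ∀ᶠ N : ℕ in atTop, ∃ M : ℕ, M ≤ N * R ∧ HasParityCode (tpow (parityDiagonal s) N) (parityOp M)
      (tpow (Matrix.diagonal fun i => (p i : ℂ)) N) (1 - δ) := by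
  have : Nonempty d := not_isEmpty_iff.1 fun _ => by simp at hp1
  obtain ⟨c, hSc, hcR⟩ := exists_between hR
  have hc : 0 ≤ c := (neg_sum_mul_logb_nonneg hp hp1).trans hSc.le
  have hfid : ∀ᶠ N in atTop, 1 - δ ≤ (∑ x ∈ typicalSet p c N, ∏ k, p (x k)) ^ 2 :=
    ((tendsto_sum_typicalSet hp hp1 hSc).pow 2).eventually_const_le (by linarith)
  filter_upwards [eventually_exists_nat_mul_le_add_one_le hc hcR, hfid] with N ⟨M, hcM, hMR⟩ hN
  exact ⟨M + 1, by exact_mod_cast hMR,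
    (hasParityCode_typicalSet hp hp1 s hcM).mono hN⟩

theorem fermionic_source_coding_direct_general {ρ P : Matrix d d ℂ} (hρ : ρ.PosSemidef)
    (htr : ρ.trace = 1) (hP : P.IsHermitian) (hP2 : P * P = 1) (hcomm : Commute ρ P)
    (hR : vnEntropy hρ.1 < R) (hδ : 0 < δ) :
    ∀ᶠ N : ℕ in atTop, ∃ M : ℕ, M ≤ N * R ∧
      HasParityCode (tpow P N) (parityOp M) (tpow ρ N) (1 - δ) := by
  obtain ⟨U, hU, p, s, hp, hp1, hρU, rfl⟩ :=
    exists_unitary_eq_diagonal_parityDiagonal hρ htr hP hP2 hcomm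
  rw [vnEntropy_eq_of_eq_diagonal hρ.1 hU hρU] at hR
  filter_upwards [eventually_exists_hasParityCode_diagonal hp hp1 s hR hδ] with N ⟨M, hMR, hcode⟩
  refine ⟨M, hMR, ?_⟩
  simpa only [hρU, tpow_mul, tpow_conjTranspose] using
    hcode.conj_unitary (tpow_mem_unitaryGroup hU N)

end SourceCoding

/-- Fermionic source coding, direct part: for any rate `R > S(ρ)` there are parity-respecting
(i.e. admissible fermionic) encoding and decoding channels into `M ≤ N·R` modes whose
composition has entanglement fidelity at least `1 − δ` on `ρ^{⊗N}`, for all large `N`. -/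
theorem fermionic_source_coding_direct (L : ℕ)
    (ρ : Matrix (BitStr L) (BitStr L) ℂ) (hρ : ρ.PosSemidef) (htr : ρ.trace = 1)
    (hpar : ρ * parityOp L = parityOp L * ρ)
    (R : ℝ) (hR : vnEntropy hρ.1 < R) (δ : ℝ) (hδ : 0 < δ) :
    ∃ N₀ : ℕ, ∀ N ≥ N₀,
      ∃ M : ℕ, (M : ℝ) ≤ (N : ℝ) * R ∧
      ∃ (nE : ℕ) (E : Fin nE → Matrix (BitStr M) (Fin N → BitStr L) ℂ)
        (nD : ℕ) (D : Fin nD → Matrix (Fin N → BitStr L) (BitStr M) ℂ),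
        (∑ i, (E i)ᴴ * E i = 1) ∧
        (∀ i, parityOp M * E i = E i * tpow (parityOp L) N ∨
              parityOp M * E i = -(E i * tpow (parityOp L) N)) ∧
        (∑ j, (D j)ᴴ * D j = 1) ∧
        (∀ j, tpow (parityOp L) N * D j = D j * parityOp M ∨
              tpow (parityOp L) N * D j = -(D j * parityOp M)) ∧
        1 - δ ≤ ∑ i, ∑ j, ‖(tpow ρ N * (D j * E i)).trace‖ ^ 2 := by
  have hcode := fermionic_source_coding_direct_general hρ htr (parityOp_isHermitian L)
    (parityOp_mul_self L) hpar hR hδ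
  obtain ⟨N₀, hN₀⟩ := eventually_atTop.1 hcode
  refine ⟨N₀, fun N hN => ?_⟩
  obtain ⟨M, hMR, nE, E, nD, D, hE, hD, hfid⟩ := hN₀ N hN
  rw [entanglementFidelity, Fintype.sum_prod_type] at hfid
  exact ⟨M, hMR, nE, E, nD, D, hE.sum_conjTranspose_mul_self, hE.isParityHomogeneous,
    hD.sum_conjTranspose_mul_self, hD.isParityHomogeneous, hfid⟩
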